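/- Let A and B be M×M Hermitian positive semidefinite complex matrices. Then det(I_M + A + B) ≤ det(I_M + A) · det(I_M + B) (all three determinants being positive reals). Consequently, for M×M complex matrices H_{21}, H_{22} and positive semidefinite Q_1, Q_2, the achievable rate satisfies det(I_M + H_{21} Q_1 H_{21}^H + H_{22} Q_2 H_{22}^H) / det(I_M + H_{21} Q_1 H_{21}^H) ≤ det(I_M + H_{22} Q_2 H_{22}^H); that is, the rate of the information-decoding receiver is maximized over Q_1 by the choice Q_1 = 0. -/

import Mathlib

open Matrix
open scoped ComplexOrder

/-!
For `X` positive definite, `det (X + Cᴴ * C) = det X * det (1 + C * X⁻¹ * Cᴴ)`. As `X` increases in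
the Loewner order, `X⁻¹` decreases, hence so does the ratio `det (X + B) / det X` for every positive
semidefinite `B = Cᴴ * C`. Comparing the values of this ratio at `X` and at `X + A` gives
`det (X + A + B) * det X ≤ det (X + A) * det (X + B)`, of which the theorem is the case `X = 1`.
-/

section

open scoped MatrixOrder

variable {𝕜 n : Type*} [RCLike 𝕜] [Fintype n] {A B X Y : Matrix n n 𝕜}

lemma exists_eq_conjTranspose_mul_self (hA : A.PosSemidef) : ∃ C : Matrix n n 𝕜, A = Cᴴ * C := by
  classical exact CStarAlgebra.nonneg_iff_eq_star_mul_self.mp hA.nonneg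

variable [DecidableEq n]

lemma det_one_add_eq_prod_eigenvalues (hA : A.IsHermitian) :
    (1 + A).det = ∏ i, (1 + (hA.eigenvalues i : 𝕜)) := by
  set U := hA.eigenvectorUnitary
  set D : Matrix n n 𝕜 := diagonal (RCLike.ofReal ∘ hA.eigenvalues)
  have hUD : A = U * D * star (U : Matrix n n 𝕜) := hA.spectral_theorem
  calc (1 + A).det
      = (1 + U * (D * star (U : Matrix n n 𝕜))).det := by rw [← mul_assoc, ← hUD]
    _ = (1 + D).det := by
        rw [det_one_add_mul_comm, mul_assoc, Unitary.coe_star_mul_self, mul_one]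
    _ = ∏ i, (1 + (hA.eigenvalues i : 𝕜)) := by
        rw [← diagonal_one, diagonal_add, det_diagonal]
        rfl

lemma one_le_det_one_add (hA : A.PosSemidef) : 1 ≤ (1 + A).det := by
  rw [det_one_add_eq_prod_eigenvalues hA.isHermitian]
  have hprod : 1 ≤ ∏ i, (1 + hA.isHermitian.eigenvalues i) :=
    Finset.one_le_prod fun i _ ↦ le_add_of_nonneg_right (hA.eigenvalues_nonneg i)
  exact_mod_cast hprod

lemma det_le_det_of_le (hX : X.PosSemidef) (hXY : X ≤ Y) : X.det ≤ Y.det := by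
  obtain hdet | hdet := eq_or_ne X.det 0
  · rw [hdet]
    exact (nonneg_iff_posSemidef.mp (hX.nonneg.trans hXY)).det_nonneg
  have hXpos : X.PosDef := hX.posDef_iff_det_ne_zero.mpr hdet
  obtain ⟨C, hC⟩ := exists_eq_conjTranspose_mul_self (le_iff.mp hXY)
  rw [← add_sub_cancel X Y, hC, det_add_mul _ _ hdet.isUnit]
  exact le_mul_of_one_le_right hX.det_nonneg
    (one_le_det_one_add (hXpos.inv.posSemidef.mul_mul_conjTranspose_same C))

lemma inv_le_inv_of_posDef_of_le (hX : X.PosDef) (hXY : X ≤ Y) : Y⁻¹ ≤ X⁻¹ := by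
  have hY : Y.PosDef := add_sub_cancel X Y ▸ hX.add_posSemidef (le_iff.mp hXY)
  have hXu : IsUnit X.det := hX.det_pos.ne'.isUnit
  have hYu : IsUnit Y.det := hY.det_pos.ne'.isUnit
  have hdecomp : X⁻¹ - Y⁻¹ = (X⁻¹ - Y⁻¹) * X * (X⁻¹ - Y⁻¹)ᴴ + Y⁻¹ * (Y - X) * Y⁻¹ᴴ := by
    rw [(hX.inv.isHermitian.sub hY.inv.isHermitian).eq, hY.inv.isHermitian.eq]
    simp only [sub_mul, mul_sub, nonsing_inv_mul _ hXu, nonsing_inv_mul _ hYu, one_mul,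
      mul_nonsing_inv_cancel_right _ _ hXu]
    abel
  rw [le_iff, hdecomp]
  exact (hX.posSemidef.mul_mul_conjTranspose_same _).add
    ((le_iff.mp hXY).mul_mul_conjTranspose_same _)

lemma det_add_add_mul_det_le (hX : X.PosSemidef) (hA : A.PosSemidef) (hB : B.PosSemidef) :
    (X + A + B).det * X.det ≤ (X + A).det * (X + B).det := by
  obtain hdet | hdet := eq_or_ne X.det 0
  · rw [hdet, mul_zero]
    exact mul_nonneg (hX.add hA).det_nonneg (hX.add hB).det_nonneg
  have hXpos : X.PosDef := hX.posDef_iff_det_ne_zero.mpr hdet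
  have hXA : (X + A).PosDef := hXpos.add_posSemidef hA
  obtain ⟨C, rfl⟩ := exists_eq_conjTranspose_mul_self hB
  have hratio : (1 + C * (X + A)⁻¹ * Cᴴ).det ≤ (1 + C * X⁻¹ * Cᴴ).det :=
    det_le_det_of_le (PosSemidef.one.add (hXA.inv.posSemidef.mul_mul_conjTranspose_same C))
      (add_le_add_right (star_right_conjugate_le_conjugate
        (inv_le_inv_of_posDef_of_le hXpos (le_add_of_nonneg_right hA.nonneg)) C) 1)
  calc (X + A + Cᴴ * C).det * X.det
      = (X + A).det * (X.det * (1 + C * (X + A)⁻¹ * Cᴴ).det) := by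
        rw [det_add_mul _ _ hXA.det_pos.ne'.isUnit]
        ring
    _ ≤ (X + A).det * (X.det * (1 + C * X⁻¹ * Cᴴ).det) :=
        mul_le_mul_of_nonneg_left (mul_le_mul_of_nonneg_left hratio hX.det_nonneg)
          hXA.det_pos.le
    _ = (X + A).det * (X + Cᴴ * C).det := by rw [det_add_mul _ _ hdet.isUnit]

lemma re_det_one_add_pos_and_im_eq_zero (hA : A.PosSemidef) :
    0 < RCLike.re (1 + A).det ∧ RCLike.im (1 + A).det = 0 :=
  RCLike.pos_iff.mp (PosDef.one.add_posSemidef hA).det_pos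

lemma re_det_one_add_add_le (hA : A.PosSemidef) (hB : B.PosSemidef) :
    RCLike.re (1 + A + B).det ≤ RCLike.re (1 + A).det * RCLike.re (1 + B).det := by
  have hdet : (1 + A + B).det ≤ (1 + A).det * (1 + B).det := by
    simpa only [det_one, mul_one] using det_add_add_mul_det_le PosSemidef.one hA hB
  simpa only [RCLike.mul_re, (re_det_one_add_pos_and_im_eq_zero hA).2, zero_mul, sub_zero]
    using (RCLike.le_iff_re_im.mp hdet).1

end

theorem stmt5_general {𝕜 m p q : Type*} [RCLike 𝕜] [Fintype m] [DecidableEq m] [Fintype p]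
    [Fintype q] :
    (∀ A B : Matrix m m 𝕜, A.PosSemidef → B.PosSemidef →
      (0 < RCLike.re (1 + A).det ∧ RCLike.im (1 + A).det = 0) ∧
      (0 < RCLike.re (1 + B).det ∧ RCLike.im (1 + B).det = 0) ∧
      (0 < RCLike.re (1 + A + B).det ∧ RCLike.im (1 + A + B).det = 0) ∧
      RCLike.re (1 + A + B).det ≤ RCLike.re (1 + A).det * RCLike.re (1 + B).det) ∧
    (∀ (H21 : Matrix m p 𝕜) (H22 : Matrix m q 𝕜) (Q1 : Matrix p p 𝕜) (Q2 : Matrix q q 𝕜),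
      Q1.PosSemidef → Q2.PosSemidef →
      RCLike.re (1 + H21 * Q1 * H21ᴴ + H22 * Q2 * H22ᴴ).det /
          RCLike.re (1 + H21 * Q1 * H21ᴴ).det ≤
        RCLike.re (1 + H22 * Q2 * H22ᴴ).det) := by
  refine ⟨fun A B hA hB ↦ ⟨re_det_one_add_pos_and_im_eq_zero hA,
    re_det_one_add_pos_and_im_eq_zero hB, ?_, re_det_one_add_add_le hA hB⟩,
    fun H21 H22 Q1 Q2 hQ1 hQ2 ↦ ?_⟩
  · rw [add_assoc]
    exact re_det_one_add_pos_and_im_eq_zero (hA.add hB)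
  · have hS1 := hQ1.mul_mul_conjTranspose_same H21
    have hS2 := hQ2.mul_mul_conjTranspose_same H22
    exact (div_le_iff₀' (re_det_one_add_pos_and_im_eq_zero hS1).1).mpr
      (re_det_one_add_add_le hS1 hS2)

/-- For Hermitian positive semidefinite `M × M` complex matrices `A, B`, the
determinants `det (I + A)`, `det (I + B)`, `det (I + A + B)` are positive reals and
`det (I + A + B) ≤ det (I + A) · det (I + B)`.  Consequently, for channels `H₂₁, H₂₂` and
PSD covariances `Q₁, Q₂`,
`det (I + H₂₁Q₁H₂₁ᴴ + H₂₂Q₂H₂₂ᴴ) / det (I + H₂₁Q₁H₂₁ᴴ) ≤ det (I + H₂₂Q₂H₂₂ᴴ)`,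
i.e. the information rate is maximized over `Q₁` by `Q₁ = 0`. -/
theorem stmt5 (M : ℕ) :
    (∀ A B : Matrix (Fin M) (Fin M) ℂ, A.PosSemidef → B.PosSemidef →
      (0 < (1 + A).det.re ∧ (1 + A).det.im = 0) ∧
      (0 < (1 + B).det.re ∧ (1 + B).det.im = 0) ∧
      (0 < (1 + A + B).det.re ∧ (1 + A + B).det.im = 0) ∧
      (1 + A + B).det.re ≤ (1 + A).det.re * (1 + B).det.re) ∧
    (∀ H21 H22 Q1 Q2 : Matrix (Fin M) (Fin M) ℂ, Q1.PosSemidef → Q2.PosSemidef →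
      (1 + H21 * Q1 * H21ᴴ + H22 * Q2 * H22ᴴ).det.re / (1 + H21 * Q1 * H21ᴴ).det.re ≤
        (1 + H22 * Q2 * H22ᴴ).det.re) :=
  stmt5_general
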